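/- Upper expected optimal value bound (Lemma 3, Eq. 13): Suppose π* is a policy maximizing J, i.e. J(π*) ≥ J(π) for every policy π. Then for every integer m ≥ 0, J(π*) ≤ (1/β) ∑_{s : p(s)>0} p(s) ∑_{a∈A} π*(a|s) log( πᵐ⁺¹(a|s) / πᵐ(a|s) ) + ∑_{s : p(s)>0} p(s) B_{priorᵐ, πᵐ⁺¹}V(s). -/

import Mathlib

open Finset

/-- A probability distribution on a finite type: nonnegative and sums to one. -/
def IsDist {X : Type*} [Fintype X] (d : X → ℝ) : Prop :=
  (∀ x, 0 ≤ d x) ∧ ∑ x, d x = 1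

/-- Kullback–Leibler divergence: sum over points where `μ` is positive. -/
noncomputable def KL {X : Type*} [Fintype X] (μ ν : X → ℝ) : ℝ :=
  ∑ x, if 0 < μ x then μ x * Real.log (μ x / ν x) else 0

/-- Marginal action distribution of policy `π` under state distribution `p`. -/
noncomputable def margPol {S A : Type*} [Fintype S] [Fintype A]
    (p : S → ℝ) (π : S → A → ℝ) (a : A) : ℝ :=
  ∑ s, p s * π s a

/-- Evaluation operator `B_{q,π} V (s)` (with `F s a = R s a + γ 𝔼[V]` precomputed). -/
noncomputable def Beval {S A : Type*} [Fintype S] [Fintype A]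
    (F : S → A → ℝ) (β : ℝ) (q : A → ℝ) (π : S → A → ℝ) (s : S) : ℝ :=
  ∑ a, if 0 < π s a then π s a * (F s a - (1 / β) * Real.log (π s a / q a)) else 0

/-- Mutual-information-regularized objective `J(π)`. -/
noncomputable def Jobj {S A : Type*} [Fintype S] [Fintype A]
    (p : S → ℝ) (F : S → A → ℝ) (β : ℝ) (π : S → A → ℝ) : ℝ :=
  ∑ s, if 0 < p s then
    p s * ∑ a, (if 0 < π s a then
      π s a * (F s a - (1 / β) * Real.log (π s a / margPol p π a)) else 0)
  else 0

/-- Blahut–Arimoto policy iterates. -/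
noncomputable def BApol {S A : Type*} [Fintype S] [Fintype A]
    (p : S → ℝ) (F : S → A → ℝ) (β : ℝ) (π0 : S → A → ℝ) : ℕ → S → A → ℝ
  | 0 => π0
  | m + 1 => fun s a =>
      ((∑ s', p s' * BApol p F β π0 m s' a) * Real.exp (β * F s a)) /
        ∑ a', (∑ s', p s' * BApol p F β π0 m s' a') * Real.exp (β * F s a')

/-- Blahut–Arimoto prior iterates: the marginal of the `m`-th policy under `p`. -/
noncomputable def BAprior {S A : Type*} [Fintype S] [Fintype A]
    (p : S → ℝ) (F : S → A → ℝ) (β : ℝ) (π0 : S → A → ℝ) (m : ℕ) (a : A) : ℝ :=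
  ∑ s, p s * BApol p F β π0 m s a

/-!
The gap in the bound is a Kullback–Leibler divergence. Write `π` for `π*`, `u = πᵐ`, `q = priorᵐ`,
`w = πᵐ⁺¹` and `M` for the marginal of `π`. As `w` is the Gibbs policy of the prior `q`, the
quantity `F(s,a) - (1/β) log (w(a|s) / q(a))` does not depend on `a`, so `B_{q,w}V(s)` is also its
average under `π(·|s)`. Hence the right-hand side exceeds `J(π)` by exactly `1/β` times the average
of `log (π(a|s) q(a) / (u(a|s) M(a)))`, which is the divergence of `p(s) π(a|s)` from
`M(a) · (p(s) u(a|s) / q(a))`. The latter keeps the action marginal `M` but draws the state from the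
Bayes posterior of `u`, and Gibbs' inequality concludes.
-/

section Distribution

variable {X : Type*} [Fintype X] {μ ν : X → ℝ}

theorem IsDist.exists_pos (hμ : IsDist μ) : ∃ x, 0 < μ x := by
  obtain ⟨x, -, hx⟩ := exists_lt_of_sum_lt (s := univ) (f := fun _ => (0 : ℝ)) (g := μ)
    (by simp [hμ.2])
  exact ⟨x, hx⟩

theorem ite_pos_mul_eq_mul {x : ℝ} (hx : 0 ≤ x) (y : ℝ) :
    (if 0 < x then x * y else 0) = x * y := by
  rcases hx.eq_or_lt with rfl | hx
  · simp
  · exact if_pos hx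

theorem KL_eq_sum (hμ : ∀ x, 0 ≤ μ x) (ν : X → ℝ) :
    KL μ ν = ∑ x, μ x * Real.log (μ x / ν x) :=
  sum_congr rfl fun x _ => ite_pos_mul_eq_mul (hμ x) _

theorem sub_le_mul_log_div {x y : ℝ} (hx : 0 < x) (hy : 0 < y) :
    x - y ≤ x * Real.log (x / y) :=
  calc x - y = x * (1 - (x / y)⁻¹) := by field_simp
    _ ≤ x * Real.log (x / y) :=
      mul_le_mul_of_nonneg_left (Real.one_sub_inv_le_log_of_pos (div_pos hx hy)) hx.le

theorem KL_nonneg (hμ : ∀ x, 0 ≤ μ x) (hν : ∀ x, 0 ≤ ν x) (hμν : ∀ x, 0 < μ x → 0 < ν x)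
    (hsum : ∑ x, ν x ≤ ∑ x, μ x) : 0 ≤ KL μ ν :=
  calc 0 ≤ ∑ x, (μ x - ν x) := by rwa [sum_sub_distrib, sub_nonneg]
    _ ≤ ∑ x, μ x * Real.log (μ x / ν x) := by
      refine sum_le_sum fun x _ => ?_
      rcases (hμ x).eq_or_lt with h | h
      · simpa [← h] using hν x
      · exact sub_le_mul_log_div h (hμν x h)
    _ = KL μ ν := (KL_eq_sum hμ ν).symm

end Distribution

section Joint

variable {S A : Type*} {p : S → ℝ} {π u : S → A → ℝ} {M : A → ℝ}

/-- The joint law on `S × A` of a state drawn from `p` and an action drawn from `π(·|s)`. -/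
def jointLaw (p : S → ℝ) (π : S → A → ℝ) (x : S × A) : ℝ :=
  p x.1 * π x.1 x.2

theorem jointLaw_nonneg (hp : ∀ s, 0 ≤ p s) (hπ : ∀ s a, 0 ≤ π s a) (x : S × A) :
    0 ≤ jointLaw p π x :=
  mul_nonneg (hp _) (hπ _ _)

variable [Fintype S] [Fintype A]

theorem mul_le_margPol (hp : ∀ s, 0 ≤ p s) (hπ : ∀ s a, 0 ≤ π s a) (s : S) (a : A) :
    p s * π s a ≤ margPol p π a :=
  single_le_sum (f := fun s => p s * π s a) (fun s _ => mul_nonneg (hp s) (hπ s a)) (mem_univ s)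

theorem margPol_nonneg (hp : ∀ s, 0 ≤ p s) (hπ : ∀ s a, 0 ≤ π s a) (a : A) :
    0 ≤ margPol p π a :=
  sum_nonneg fun s _ => mul_nonneg (hp s) (hπ s a)

theorem margPol_pos (hp : ∀ s, 0 ≤ p s) (hπ : ∀ s a, 0 ≤ π s a) {s : S} {a : A}
    (hs : 0 < p s) (ha : 0 < π s a) : 0 < margPol p π a :=
  (mul_pos hs ha).trans_le (mul_le_margPol hp hπ s a)

theorem sum_jointLaw (p : S → ℝ) (π : S → A → ℝ) :
    ∑ x, jointLaw p π x = ∑ a, margPol p π a :=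
  Fintype.sum_prod_type_right _

/-- The joint law on `S × A` of an action drawn from `M` and a state drawn from the Bayes posterior
`p(s) u(a|s) / m_u(a)` of the policy `u`. Actions of zero marginal `m_u(a)` get mass `0`. -/
noncomputable def posteriorJointLaw (p : S → ℝ) (u : S → A → ℝ) (M : A → ℝ) (x : S × A) : ℝ :=
  M x.2 * (jointLaw p u x / margPol p u x.2)

theorem posteriorJointLaw_nonneg (hp : ∀ s, 0 ≤ p s) (hu : ∀ s a, 0 ≤ u s a)
    (hM : ∀ a, 0 ≤ M a) (x : S × A) : 0 ≤ posteriorJointLaw p u M x :=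
  mul_nonneg (hM _) (div_nonneg (jointLaw_nonneg hp hu x) (margPol_nonneg hp hu _))

theorem posteriorJointLaw_pos (hp : ∀ s, 0 ≤ p s) (hu : ∀ s a, 0 ≤ u s a) {s : S} {a : A}
    (hM : 0 < M a) (hs : 0 < p s) (ha : 0 < u s a) : 0 < posteriorJointLaw p u M (s, a) :=
  mul_pos hM (div_pos (mul_pos hs ha) (margPol_pos hp hu hs ha))

theorem sum_posteriorJointLaw_le (p : S → ℝ) (u : S → A → ℝ) (hM : ∀ a, 0 ≤ M a) :
    ∑ x, posteriorJointLaw p u M x ≤ ∑ a, M a := by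
  rw [Fintype.sum_prod_type_right]
  refine sum_le_sum fun a _ => ?_
  calc ∑ s, posteriorJointLaw p u M (s, a) = M a * (margPol p u a / margPol p u a) := by
        simp only [posteriorJointLaw, ← mul_sum, ← sum_div]; rfl
    _ ≤ M a := mul_le_of_le_one_right (hM a) (div_self_le_one _)

theorem log_jointLaw_div_posteriorJointLaw {s : S} {a : A} (hs : 0 < p s) (hπ : 0 < π s a)
    (hu : 0 < u s a) (hM : 0 < M a) (hq : 0 < margPol p u a) :
    Real.log (jointLaw p π (s, a) / posteriorJointLaw p u M (s, a)) =
      Real.log (π s a / M a) - Real.log (u s a / margPol p u a) := by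
  have hratio : jointLaw p π (s, a) / posteriorJointLaw p u M (s, a) =
      π s a / M a / (u s a / margPol p u a) := by
    simp only [jointLaw, posteriorJointLaw]
    field_simp
  rw [hratio, Real.log_div (by positivity) (by positivity)]

theorem KL_jointLaw_posteriorJointLaw_nonneg (hp : ∀ s, 0 ≤ p s) (hπ : ∀ s a, 0 ≤ π s a)
    (hu : ∀ s a, 0 ≤ u s a) (hπu : ∀ s a, 0 < p s → 0 < π s a → 0 < u s a) :
    0 ≤ KL (jointLaw p π) (posteriorJointLaw p u (margPol p π)) := by
  have hM := margPol_nonneg hp hπ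
  refine KL_nonneg (jointLaw_nonneg hp hπ) (posteriorJointLaw_nonneg hp hu hM) ?_
    ((sum_posteriorJointLaw_le p u hM).trans_eq (sum_jointLaw p π).symm)
  rintro ⟨s, a⟩ hsa
  have hs : 0 < p s := pos_of_mul_pos_left hsa (hπ s a)
  have ha : 0 < π s a := pos_of_mul_pos_right hsa (hp s)
  exact posteriorJointLaw_pos hp hu (margPol_pos hp hπ hs ha) hs (hπu s a hs ha)

end Joint

section Gibbs

variable {S A : Type*} [Fintype A] {F : S → A → ℝ} {β : ℝ} {q : A → ℝ} {s : S} {a : A}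

/-- The partition function normalizing the Gibbs policy of the prior `q` at the state `s`. -/
noncomputable def gibbsPartition (F : S → A → ℝ) (β : ℝ) (q : A → ℝ) (s : S) : ℝ :=
  ∑ a, q a * Real.exp (β * F s a)

/-- The Gibbs policy of the prior `q`: one Blahut–Arimoto policy update. -/
noncomputable def gibbsPolicy (F : S → A → ℝ) (β : ℝ) (q : A → ℝ) (s : S) (a : A) : ℝ :=
  q a * Real.exp (β * F s a) / gibbsPartition F β q s

theorem gibbsPartition_nonneg (F : S → A → ℝ) (β : ℝ) (hq : ∀ a, 0 ≤ q a) (s : S) :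
    0 ≤ gibbsPartition F β q s :=
  sum_nonneg fun a _ => mul_nonneg (hq a) (Real.exp_pos _).le

theorem gibbsPartition_pos (F : S → A → ℝ) (β : ℝ) (hq : ∀ a, 0 ≤ q a) (ha : 0 < q a) (s : S) :
    0 < gibbsPartition F β q s :=
  sum_pos' (fun a _ => mul_nonneg (hq a) (Real.exp_pos _).le)
    ⟨a, mem_univ a, mul_pos ha (Real.exp_pos _)⟩

theorem gibbsPolicy_nonneg (F : S → A → ℝ) (β : ℝ) (hq : ∀ a, 0 ≤ q a) (s : S) (a : A) :
    0 ≤ gibbsPolicy F β q s a :=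
  div_nonneg (mul_nonneg (hq a) (Real.exp_pos _).le) (gibbsPartition_nonneg F β hq s)

theorem gibbsPolicy_pos (F : S → A → ℝ) (β : ℝ) (hq : ∀ a, 0 ≤ q a) (ha : 0 < q a) (s : S) :
    0 < gibbsPolicy F β q s a :=
  div_pos (mul_pos ha (Real.exp_pos _)) (gibbsPartition_pos F β hq ha s)

theorem sum_gibbsPolicy (hZ : gibbsPartition F β q s ≠ 0) : ∑ a, gibbsPolicy F β q s a = 1 := by
  simp only [gibbsPolicy, ← sum_div]
  exact div_self hZ

theorem sub_log_gibbsPolicy_div (hβ : β ≠ 0) (hZ : gibbsPartition F β q s ≠ 0) (ha : q a ≠ 0) :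
    F s a - 1 / β * Real.log (gibbsPolicy F β q s a / q a) =
      1 / β * Real.log (gibbsPartition F β q s) := by
  have hratio : gibbsPolicy F β q s a / q a =
      Real.exp (β * F s a) / gibbsPartition F β q s := by
    rw [gibbsPolicy]
    field_simp
  rw [hratio, Real.log_div (Real.exp_ne_zero _) hZ, Real.log_exp]
  field_simp
  ring

theorem Beval_gibbsPolicy [Fintype S] (hβ : β ≠ 0) (hq : ∀ a, 0 ≤ q a)
    (hZ : gibbsPartition F β q s ≠ 0) :
    Beval F β q (gibbsPolicy F β q) s = 1 / β * Real.log (gibbsPartition F β q s) :=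
  calc Beval F β q (gibbsPolicy F β q) s
      = ∑ a, gibbsPolicy F β q s a * (1 / β * Real.log (gibbsPartition F β q s)) := by
        refine sum_congr rfl fun a _ => ?_
        rw [ite_pos_mul_eq_mul (gibbsPolicy_nonneg F β hq s a)]
        rcases eq_or_ne (q a) 0 with ha | ha
        · simp [gibbsPolicy, ha]
        · rw [sub_log_gibbsPolicy_div hβ hZ ha]
    _ = 1 / β * Real.log (gibbsPartition F β q s) := by
        rw [← sum_mul, sum_gibbsPolicy hZ, one_mul]

theorem Beval_gibbsPolicy_eq_average [Fintype S] (F : S → A → ℝ) (hβ : β ≠ 0) (hq : ∀ a, 0 ≤ q a)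
    {d : A → ℝ} (hd : IsDist d) (hdq : ∀ a, 0 < d a → 0 < q a) (s : S) :
    Beval F β q (gibbsPolicy F β q) s =
      ∑ a, d a * (F s a - 1 / β * Real.log (gibbsPolicy F β q s a / q a)) := by
  obtain ⟨a₀, ha₀⟩ := hd.exists_pos
  have hZ := (gibbsPartition_pos F β hq (hdq a₀ ha₀) s).ne'
  calc Beval F β q (gibbsPolicy F β q) s
      = ∑ a, d a * (1 / β * Real.log (gibbsPartition F β q s)) := by
        rw [Beval_gibbsPolicy hβ hq hZ, ← sum_mul, hd.2, one_mul]
    _ = ∑ a, d a * (F s a - 1 / β * Real.log (gibbsPolicy F β q s a / q a)) := by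
        refine sum_congr rfl fun a _ => ?_
        rcases (hd.1 a).eq_or_lt with ha | ha
        · simp [← ha]
        · rw [sub_log_gibbsPolicy_div hβ hZ (hdq a ha).ne']

end Gibbs

section BlahutArimoto

variable {S A : Type*} [Fintype S] [Fintype A] {p : S → ℝ} {F : S → A → ℝ} {β : ℝ}
  {π u π0 : S → A → ℝ}

theorem BApol_succ (p : S → ℝ) (F : S → A → ℝ) (β : ℝ) (π0 : S → A → ℝ) (m : ℕ) :
    BApol p F β π0 (m + 1) = gibbsPolicy F β (BAprior p F β π0 m) :=
  rfl

theorem BApol_nonneg (hp : ∀ s, 0 ≤ p s) (F : S → A → ℝ) (β : ℝ) (hπ0 : ∀ s a, 0 ≤ π0 s a)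
    (m : ℕ) : ∀ s a, 0 ≤ BApol p F β π0 m s a := by
  induction m with
  | zero => exact hπ0
  | succ m ih => exact gibbsPolicy_nonneg F β (margPol_nonneg hp ih)

theorem BApol_pos (hp : ∀ s, 0 ≤ p s) (F : S → A → ℝ) (β : ℝ) (hπ0 : ∀ s a, 0 ≤ π0 s a)
    {s : S} {a : A} (hs : 0 < p s) (ha : 0 < π0 s a) (m : ℕ) : 0 < BApol p F β π0 m s a := by
  induction m with
  | zero => exact ha
  | succ m ih =>
    have hu := BApol_nonneg hp F β hπ0 m
    exact gibbsPolicy_pos F β (margPol_nonneg hp hu) (margPol_pos hp hu hs ih) s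

theorem Jobj_eq_sum (hp : ∀ s, 0 ≤ p s) (F : S → A → ℝ) (β : ℝ) (hπ : ∀ s a, 0 ≤ π s a) :
    Jobj p F β π =
      ∑ s, p s * ∑ a, π s a * (F s a - 1 / β * Real.log (π s a / margPol p π a)) := by
  simp only [Jobj, ite_pos_mul_eq_mul (hp _), ite_pos_mul_eq_mul (hπ _ _)]

theorem Jobj_add_KL_eq (hp : ∀ s, 0 ≤ p s) (F : S → A → ℝ) (hβ : β ≠ 0)
    (hπ : ∀ s, IsDist (π s)) (hu : ∀ s a, 0 ≤ u s a)
    (hπu : ∀ s a, 0 < p s → 0 < π s a → 0 < u s a) :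
    Jobj p F β π + 1 / β * KL (jointLaw p π) (posteriorJointLaw p u (margPol p π)) =
      1 / β * ∑ s, p s * ∑ a, π s a * Real.log (gibbsPolicy F β (margPol p u) s a / u s a) +
        ∑ s, p s * Beval F β (margPol p u) (gibbsPolicy F β (margPol p u)) s := by
  have hπ_nonneg : ∀ s a, 0 ≤ π s a := fun s => (hπ s).1
  have hq := margPol_nonneg hp hu
  rw [Jobj_eq_sum hp F β hπ_nonneg, KL_eq_sum (jointLaw_nonneg hp hπ_nonneg),
    Fintype.sum_prod_type, mul_sum, mul_sum, ← sum_add_distrib, ← sum_add_distrib]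
  refine sum_congr rfl fun s _ => ?_
  rcases (hp s).eq_or_lt with hs | hs
  · simp [jointLaw, ← hs]
  have hq_pos : ∀ a, 0 < π s a → 0 < margPol p u a := fun a ha =>
    margPol_pos hp hu hs (hπu s a hs ha)
  rw [Beval_gibbsPolicy_eq_average F hβ hq (hπ s) hq_pos]
  simp only [mul_sum, ← sum_add_distrib]
  refine sum_congr rfl fun a _ => ?_
  rcases (hπ_nonneg s a).eq_or_lt with ha | ha
  · simp [jointLaw, ← ha]
  have hu_pos := hπu s a hs ha
  have hw_pos := gibbsPolicy_pos F β hq (hq_pos a ha) s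
  have hupdate : Real.log (gibbsPolicy F β (margPol p u) s a / u s a) =
      Real.log (gibbsPolicy F β (margPol p u) s a / margPol p u a) -
        Real.log (u s a / margPol p u a) := by
    rw [← Real.log_div (div_pos hw_pos (hq_pos a ha)).ne' (div_pos hu_pos (hq_pos a ha)).ne',
      div_div_div_cancel_right₀ (hq_pos a ha).ne']
  rw [log_jointLaw_div_posteriorJointLaw hs ha hu_pos (margPol_pos hp hπ_nonneg hs ha)
    (hq_pos a ha), hupdate]
  simp only [jointLaw]
  ring

theorem upper_expected_optimal_value_bound_general (hp : IsDist p) (F : S → A → ℝ) (hβ : 0 < β)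
    (hπ0 : ∀ s, IsDist (π0 s)) (hπ : ∀ s, IsDist (π s))
    (hππ0 : ∀ s a, 0 < p s → 0 < π s a → 0 < π0 s a) (m : ℕ) :
    Jobj p F β π
      ≤ (1 / β) *
          (∑ s, if 0 < p s then
            p s * ∑ a, π s a *
              Real.log (BApol p F β π0 (m + 1) s a / BApol p F β π0 m s a) else 0) +
        ∑ s, (if 0 < p s then
          p s * Beval F β (BAprior p F β π0 m) (BApol p F β π0 (m + 1)) s else 0) := by
  have hπ0_nonneg : ∀ s a, 0 ≤ π0 s a := fun s => (hπ0 s).1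
  have hu := BApol_nonneg hp.1 F β hπ0_nonneg m
  have hπu : ∀ s a, 0 < p s → 0 < π s a → 0 < BApol p F β π0 m s a := fun s a hs ha =>
    BApol_pos hp.1 F β hπ0_nonneg hs (hππ0 s a hs ha) m
  have hgap := Jobj_add_KL_eq hp.1 F hβ.ne' hπ hu hπu
  have hKL := KL_jointLaw_posteriorJointLaw_nonneg hp.1 (fun s => (hπ s).1) hu hπu
  simp only [ite_pos_mul_eq_mul (hp.1 _), BApol_succ]
  exact (le_add_of_nonneg_right (mul_nonneg (one_div_pos.2 hβ).le hKL)).trans_eq hgap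

end BlahutArimoto

/-- Upper expected optimal value bound (Lemma 3, Eq. 13). -/
theorem upper_expected_optimal_value_bound
    {S A : Type*} [Fintype S] [Fintype A] [Nonempty S] [Nonempty A]
    (p : S → ℝ) (hp : IsDist p)
    (R : S → A → ℝ) (P : S → A → S → ℝ) (hP : ∀ s a, IsDist (P s a))
    (V : S → ℝ) (β : ℝ) (hβ : 0 < β) (γ : ℝ) (hγ : 0 < γ ∧ γ < 1)
    (F : S → A → ℝ) (hF : ∀ s a, F s a = R s a + γ * ∑ s', P s a s' * V s')
    (π0 : S → A → ℝ) (hπ0 : ∀ s, IsDist (π0 s)) (hπ0pos : ∀ s a, 0 < π0 s a)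
    (πstar : S → A → ℝ) (hπstar : ∀ s, IsDist (πstar s))
    (hopt : ∀ π : S → A → ℝ, (∀ s, IsDist (π s)) → Jobj p F β π ≤ Jobj p F β πstar)
    (m : ℕ) :
    Jobj p F β πstar
      ≤ (1 / β) *
          (∑ s, if 0 < p s then
            p s * ∑ a, πstar s a *
              Real.log (BApol p F β π0 (m + 1) s a / BApol p F β π0 m s a) else 0) +
        ∑ s, (if 0 < p s then
          p s * Beval F β (BAprior p F β π0 m) (BApol p F β π0 (m + 1)) s else 0) := by
  exact upper_expected_optimal_value_bound_general hp F hβ hπ0 hπstar (fun s a _ _ => hπ0pos s a) m
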